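/- Let g : ℝ^n → ℝ be a polynomial that is (R,θ)-attenuated, where R ≥ √2 and 0 ≤ θ ≤ 1, and write μ = E_{x∼N(0,1)^n}[g(x)]. Then for any 0 < γ ≤ 1, the probability over x ∼ N(0,1)^n that g(x) ≈_γ μ fails to hold is at most (2√θ/γ)^{R²/2 + 1}. -/

import Mathlib

open MeasureTheory ProbabilityTheory MvPolynomial

/-- The standard Gaussian measure `N(0,1)^n` on `ℝ^n`. -/
noncomputable def gaussianN (n : ℕ) : Measure (Fin n → ℝ) :=
  Measure.pi fun _ => gaussianReal 0 1

/-- The normalized probabilists' Hermite polynomial `h_k = H_k / √(k!)`. -/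
noncomputable def hermiteFn (k : ℕ) (t : ℝ) : ℝ :=
  ((Polynomial.hermite k).map (Int.castRingHom ℝ)).eval t / Real.sqrt (Nat.factorial k)

/-- The multivariate Hermite polynomial `h_α(x) = ∏ i, h_{α i}(x i)`. -/
noncomputable def hermiteMv {n : ℕ} (α : Fin n → ℕ) (x : Fin n → ℝ) : ℝ :=
  ∏ i, hermiteFn (α i) (x i)

/-- Hermite coefficient `f̂(α) = E_{x ∼ N(0,1)^n}[f(x)·h_α(x)]` of a function. -/
noncomputable def hermiteCoeffF {n : ℕ} (f : (Fin n → ℝ) → ℝ) (α : Fin n → ℕ) : ℝ :=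
  ∫ x, f x * hermiteMv α x ∂(gaussianN n)

/-- Hermite coefficient `ĝ(α)` of a polynomial. -/
noncomputable def hermiteCoeff {n : ℕ} (g : MvPolynomial (Fin n) ℝ) (α : Fin n → ℕ) : ℝ :=
  hermiteCoeffF (fun x => eval x g) α

/-- The squared Gaussian 2-norm `‖g‖₂² = E_{x ∼ N(0,1)^n}[g(x)²]`. -/
noncomputable def norm2sq {n : ℕ} (g : MvPolynomial (Fin n) ℝ) : ℝ :=
  ∫ x, (eval x g) ^ 2 ∂(gaussianN n)

/-- The `λ`-zoom of `g` at `x`: `g_{λ|x}(y) = g(√(1-λ)·x + √λ·y)`, as a polynomial in `y`. -/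
noncomputable def zoom {n : ℕ} (g : MvPolynomial (Fin n) ℝ) (lam : ℝ) (x : Fin n → ℝ) :
    MvPolynomial (Fin n) ℝ :=
  aeval (fun i => C (Real.sqrt (1 - lam) * x i) + C (Real.sqrt lam) * X i) g

/-- `HyperVar_R[g^{≥m}] = Σ_{|α| ≥ m} R^{2|α|}·ĝ(α)²`. -/
noncomputable def hyperVarGE {n : ℕ} (R : ℝ) (m : ℕ) (g : MvPolynomial (Fin n) ℝ) : ℝ :=
  ∑' α : Fin n → ℕ, if m ≤ ∑ i, α i then R ^ (2 * ∑ i, α i) * hermiteCoeff g α ^ 2 else 0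

/-- `HyperVar_R[g] = Σ_{α ≠ 0} R^{2|α|}·ĝ(α)²`. -/
noncomputable def hyperVar {n : ℕ} (R : ℝ) (g : MvPolynomial (Fin n) ℝ) : ℝ :=
  hyperVarGE R 1 g

/-- A nice distribution of polynomials of degree at most `d` on `ℝ^n`, indexed by
`υ ∈ ℝ^I`: each `g υ` has degree at most `d` and each coefficient of `g υ` is a
polynomial of degree at most `d` in `υ`. -/
def NiceFamily (n I d : ℕ) (g : (Fin I → ℝ) → MvPolynomial (Fin n) ℝ) : Prop :=
  (∀ υ, (g υ).totalDegree ≤ d) ∧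
  ∀ m : Fin n →₀ ℕ, ∃ P : MvPolynomial (Fin I) ℝ,
    P.totalDegree ≤ d ∧ ∀ υ, coeff m (g υ) = eval υ P

/-- `a ≈_ν b`: either both are zero, or they have the same sign and
`e^{-ν} ≤ a/b ≤ e^ν`. -/
def MulClose (ν a b : ℝ) : Prop :=
  (a = 0 ∧ b = 0) ∨ (0 < a * b ∧ Real.exp (-ν) ≤ a / b ∧ a / b ≤ Real.exp ν)

/-!
Write `g = ∑ ĝ(α) h_α` and let `T_s g = ∑ s^|α| ĝ(α) h_α`. The derivative in `s` of `E |T_s g|^p`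
is, after Gaussian integration by parts, a multiple of `∑ᵢ E |T_s g|^(p-2) (T_s ∂ᵢg)²`. By Hölder's
inequality and induction on the degree (the claim for the `∂ᵢg`), it follows that
`(E |T_s g|^p)^(2/p)` grows in `s` no faster than `E (T_{√(p-1) s} g)²`. Integrating from `s = 0`
gives hypercontractivity `‖T_s g‖_p ≤ ‖T_{√(p-1) s} g‖₂` for every real `p ≥ 2`.

With `s = 1` and `p = R² + 1`, applied to `g - μ`, this says `‖g - μ‖_p² ≤ HyperVar_R[g]`. For an
attenuated `g` the right-hand side is `O(θ μ²)`, so Markov's inequality for `|g - μ|^p` bounds the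
probability that `|g - μ|` exceeds a constant times `γ |μ|`. The exponent obtained is `R² + 1`.
-/

/-- Continuous functions bounded by a multiple of a power of `1 + ‖x‖`. Being closed under the
algebraic operations and integrable against every Gaussian measure, they reduce the integrability
conditions below to the shape of the integrand. The filter `⊤` in the definition makes the bound
hold everywhere, not just near infinity. -/
def PolyGrowth {E : Type*} [NormedAddCommGroup E] (F : E → ℝ) : Prop :=
  Continuous F ∧ ∃ k : ℕ, F =O[⊤] fun x => (1 + ‖x‖) ^ k

namespace PolyGrowth

variable {E : Type*} [NormedAddCommGroup E] {F G : E → ℝ}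

lemma isBigO_pow_of_le {k l : ℕ} (hkl : k ≤ l) :
    (fun x : E => (1 + ‖x‖) ^ k) =O[⊤] fun x => (1 + ‖x‖) ^ l := by
  refine .of_bound 1 (.of_forall fun x => ?_)
  rw [one_mul, Real.norm_of_nonneg (by positivity), Real.norm_of_nonneg (by positivity)]
  exact pow_le_pow_right₀ (le_add_of_nonneg_right (norm_nonneg x)) hkl

lemma const (a : ℝ) : PolyGrowth fun _ : E => a :=
  ⟨continuous_const, 0, by simpa using Asymptotics.isBigO_const_const a (one_ne_zero (α := ℝ)) ⊤⟩

lemma add (hF : PolyGrowth F) (hG : PolyGrowth G) : PolyGrowth fun x => F x + G x := by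
  obtain ⟨hFc, k, hk⟩ := hF
  obtain ⟨hGc, l, hl⟩ := hG
  exact ⟨hFc.add hGc, max k l, (hk.trans (isBigO_pow_of_le (le_max_left k l))).add
    (hl.trans (isBigO_pow_of_le (le_max_right k l)))⟩

lemma mul (hF : PolyGrowth F) (hG : PolyGrowth G) : PolyGrowth fun x => F x * G x := by
  obtain ⟨hFc, k, hk⟩ := hF
  obtain ⟨hGc, l, hl⟩ := hG
  exact ⟨hFc.mul hGc, k + l, by simpa only [pow_add] using hk.mul hl⟩

lemma sub (hF : PolyGrowth F) (hG : PolyGrowth G) : PolyGrowth fun x => F x - G x := by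
  simpa [sub_eq_add_neg] using hF.add ((const (-1)).mul hG)

lemma pow (hF : PolyGrowth F) (m : ℕ) : PolyGrowth fun x => F x ^ m := by
  induction m with
  | zero => simpa using const (E := E) 1
  | succ m ih => simpa only [pow_succ] using ih.mul hF

lemma sum {ι : Type*} (s : Finset ι) {F : ι → E → ℝ} (hF : ∀ i ∈ s, PolyGrowth (F i)) :
    PolyGrowth fun x => ∑ i ∈ s, F i x := by
  classical
  induction s using Finset.induction_on with
  | empty => simpa using const (E := E) 0
  | insert a s ha ih =>
    simp only [Finset.sum_insert ha]
    exact (hF a (by simp)).add (ih fun i hi => hF i (by simp [hi]))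

lemma abs_rpow (hF : PolyGrowth F) {r : ℝ} (hr : 0 ≤ r) : PolyGrowth fun x => |F x| ^ r := by
  obtain ⟨hFc, k, hk⟩ := hF
  refine ⟨hFc.abs.rpow_const fun _ => .inr hr, ⌈k * r⌉₊, ?_⟩
  refine (hk.abs_left.rpow hr (.of_forall fun x => by positivity)).trans
    (.of_bound 1 (.of_forall fun x => ?_))
  rw [one_mul, Real.norm_of_nonneg (by positivity), Real.norm_of_nonneg (by positivity),
    ← Real.rpow_natCast, ← Real.rpow_natCast, ← Real.rpow_mul (by positivity)]
  exact Real.rpow_le_rpow_of_exponent_le (le_add_of_nonneg_right (norm_nonneg x)) (Nat.le_ceil _)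

lemma continuousLinearMap [NormedSpace ℝ E] (L : E →L[ℝ] ℝ) : PolyGrowth L := by
  refine ⟨L.continuous, 1, .of_bound ‖L‖ (.of_forall fun x => (L.le_opNorm x).trans ?_)⟩
  rw [pow_one, Real.norm_of_nonneg (by positivity)]
  gcongr
  exact le_add_of_nonneg_left zero_le_one

lemma mvPolynomial_eval_comp {σ : Type*} {F : σ → E → ℝ} (hF : ∀ i, PolyGrowth (F i))
    (P : MvPolynomial σ ℝ) : PolyGrowth fun x => MvPolynomial.eval (fun i => F i x) P := by
  induction P using MvPolynomial.induction_on with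
  | C a => simpa using const (E := E) a
  | add P Q hP hQ => simpa using hP.add hQ
  | mul_X P i hP => simpa using hP.mul (hF i)

lemma coord {σ : Type*} [Fintype σ] (i : σ) : PolyGrowth fun x : σ → ℝ => x i :=
  continuousLinearMap (ContinuousLinearMap.proj (R := ℝ) (φ := fun _ => ℝ) i)

lemma mvPolynomial_eval {σ : Type*} [Fintype σ] (P : MvPolynomial σ ℝ) :
    PolyGrowth fun x : σ → ℝ => MvPolynomial.eval x P :=
  mvPolynomial_eval_comp coord P

lemma exists_bound_of_norm_fst_le {E' : Type*} [NormedAddCommGroup E'] {F : E' × E → ℝ}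
    (hF : PolyGrowth F) (K : ℝ) :
    ∃ (C : ℝ) (k : ℕ), ∀ y x, ‖y‖ ≤ K → |F (y, x)| ≤ C * (1 + ‖x‖) ^ k := by
  obtain ⟨-, k, hk⟩ := hF
  obtain ⟨C, hC0, hC⟩ := hk.exists_nonneg
  rw [Asymptotics.isBigOWith_top] at hC
  refine ⟨C * (1 + K) ^ k, k, fun y x hy => (hC (y, x)).trans ?_⟩
  have hnorm : 1 + ‖(y, x)‖ ≤ (1 + K) * (1 + ‖x‖) := by
    have hK : 0 ≤ K := (norm_nonneg y).trans hy
    have hmax : ‖(y, x)‖ ≤ K + ‖x‖ :=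
      norm_prod_le_iff.2 ⟨hy.trans (le_add_of_nonneg_right (norm_nonneg x)),
        le_add_of_nonneg_left hK⟩
    nlinarith [mul_nonneg hK (norm_nonneg x)]
  rw [Real.norm_of_nonneg (by positivity), mul_assoc, ← mul_pow]
  gcongr

lemma prodMk_left {E' : Type*} [NormedAddCommGroup E'] {F : E' × E → ℝ} (hF : PolyGrowth F)
    (y : E') : PolyGrowth fun x => F (y, x) := by
  obtain ⟨C, k, hC⟩ := hF.exists_bound_of_norm_fst_le ‖y‖
  refine ⟨hF.1.comp (.prodMk_right y), k, .of_bound C (.of_forall fun x => ?_)⟩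
  rw [Real.norm_of_nonneg (r := (1 + ‖x‖) ^ k) (by positivity)]
  exact hC y x le_rfl

section Gaussian

variable [NormedSpace ℝ E] [MeasurableSpace E] [BorelSpace E] [CompleteSpace E]
  [SecondCountableTopology E] (μ : Measure E) [IsGaussian μ]

lemma integrable_one_add_norm_pow (k : ℕ) : Integrable (fun x : E => (1 + ‖x‖) ^ k) μ := by
  have hnorm : MemLp (fun x : E => 1 + ‖x‖) k μ :=
    (memLp_const (1 : ℝ)).add (IsGaussian.memLp_id μ k (ENNReal.natCast_ne_top k)).norm
  refine hnorm.integrable_norm_pow'.congr (.of_forall fun x => ?_)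
  simp only [Real.norm_of_nonneg (show 0 ≤ 1 + ‖x‖ by positivity)]

lemma integrable (hF : PolyGrowth F) : Integrable F μ := by
  obtain ⟨hFc, k, hk⟩ := hF
  obtain ⟨C, hC⟩ := hk.bound
  refine ((integrable_one_add_norm_pow μ k).const_mul C).mono' hFc.aestronglyMeasurable
    (.of_forall fun x => (Filter.eventually_top.1 hC x).trans_eq ?_)
  rw [Real.norm_of_nonneg (by positivity)]

lemma hasDerivAt_integral {F F' : ℝ → E → ℝ} (hd : ∀ s x, HasDerivAt (F · x) (F' s x) s)
    (hF : PolyGrowth fun p : ℝ × E => F p.1 p.2) (hF' : PolyGrowth fun p : ℝ × E => F' p.1 p.2)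
    (s : ℝ) : HasDerivAt (fun s => ∫ x, F s x ∂μ) (∫ x, F' s x ∂μ) s := by
  obtain ⟨C, k, hC⟩ := hF'.exists_bound_of_norm_fst_le (|s| + 1)
  refine (hasDerivAt_integral_of_dominated_loc_of_deriv_le (Metric.ball_mem_nhds s one_pos)
    (.of_forall fun r => (hF.prodMk_left r).1.aestronglyMeasurable)
    ((hF.prodMk_left s).integrable μ) (hF'.prodMk_left s).1.aestronglyMeasurable
    (.of_forall fun x r hr => hC r x ?_)
    ((integrable_one_add_norm_pow μ k).const_mul C) (.of_forall fun x r _ => hd r x)).2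
  have hdist : ‖r - s‖ < 1 := by simpa [dist_eq_norm] using hr
  calc ‖r‖ ≤ ‖s‖ + ‖r - s‖ := norm_le_norm_add_norm_sub' r s
    _ ≤ |s| + 1 := add_le_add_right hdist.le _

end Gaussian

end PolyGrowth

instance isGaussian_gaussianN (n : ℕ) : IsGaussian (gaussianN n) := by
  have hlaw (i : Fin n) : HasGaussianLaw (fun x : Fin n → ℝ => x i) (gaussianN n) :=
    ⟨by
      rw [gaussianN, (measurePreserving_eval (fun _ : Fin n => gaussianReal 0 1) i).map_eq]
      infer_instance⟩
  have hindep : iIndepFun (fun i (x : Fin n → ℝ) => x i) (gaussianN n) :=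
    iIndepFun_pi (X := fun _ t => t) fun _ => aemeasurable_id
  simpa using (hindep.hasGaussianLaw hlaw).isGaussian_map

lemma hasDerivAt_gaussianPDFReal (μ : ℝ) {v : NNReal} (hv : v ≠ 0) (t : ℝ) :
    HasDerivAt (gaussianPDFReal μ v) (-(t - μ) / v * gaussianPDFReal μ v t) t := by
  have hexponent : HasDerivAt (fun t : ℝ => -(t - μ) ^ 2 / (2 * v)) (-(t - μ) / v) t := by
    convert! (((hasDerivAt_id t).sub_const μ).pow 2).neg.div_const (2 * (v : ℝ)) using 1
    simp only [id_eq, mul_one, Nat.add_one_sub_one, pow_one, Nat.cast_ofNat]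
    field_simp
  convert! hexponent.exp.const_mul (√(2 * Real.pi * v))⁻¹ using 1
  rw [gaussianPDFReal]
  ring

lemma integrable_gaussianReal_iff {μ : ℝ} {v : NNReal} (hv : v ≠ 0) {f : ℝ → ℝ} :
    Integrable f (gaussianReal μ v) ↔ Integrable fun t => gaussianPDFReal μ v t * f t := by
  rw [gaussianReal_of_var_ne_zero _ hv, integrable_withDensity_iff_integrable_smul'
    (measurable_gaussianPDF μ v) (ae_of_all _ fun _ => gaussianPDF_lt_top)]
  simp [toReal_gaussianPDF]

lemma integral_sub_mul_gaussianReal (μ : ℝ) (v : NNReal) {f f' : ℝ → ℝ}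
    (hd : ∀ t, HasDerivAt f (f' t) t) (hf : Integrable f (gaussianReal μ v))
    (hxf : Integrable (fun t => (t - μ) * f t) (gaussianReal μ v))
    (hf' : Integrable f' (gaussianReal μ v)) :
    ∫ t, (t - μ) * f t ∂(gaussianReal μ v) = v * ∫ t, f' t ∂(gaussianReal μ v) := by
  obtain rfl | hv := eq_or_ne v 0
  · simp
  have hv' : (v : ℝ) ≠ 0 := mod_cast hv
  rw [integrable_gaussianReal_iff hv] at hf hxf hf'
  have hparts := integral_mul_deriv_eq_deriv_mul_of_integrable
    (fun t _ => hasDerivAt_gaussianPDFReal μ hv t) (fun t _ => hd t)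
    hf' ((hxf.const_mul (-(v : ℝ)⁻¹)).congr (.of_forall fun t => by
      simp only [Pi.mul_apply]; ring)) hf
  rw [integral_gaussianReal_eq_integral_smul hv, integral_gaussianReal_eq_integral_smul hv]
  simp only [smul_eq_mul]
  rw [hparts, ← integral_neg, ← integral_const_mul]
  congr with t
  field_simp

lemma integral_coord_mul_gaussianN {n : ℕ} (i : Fin n) {F F' : (Fin n → ℝ) → ℝ}
    (hd : ∀ x, HasDerivAt (fun t => F (Function.update x i t)) (F' x) (x i))
    (hF : PolyGrowth F) (hF' : PolyGrowth F') :
    ∫ x, x i * F x ∂(gaussianN n) = ∫ x, F' x ∂(gaussianN n) := by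
  obtain _ | m := n
  · exact i.elim0
  have hsplit := (measurePreserving_piFinSuccAbove (fun _ => gaussianReal 0 1) i).symm
  have hint {H : (Fin (m + 1) → ℝ) → ℝ} (hH : PolyGrowth H) :
      Integrable (fun p : ℝ × (Fin m → ℝ) => H (i.insertNth p.1 p.2))
        ((gaussianReal 0 1).prod (gaussianN m)) :=
    hsplit.integrable_comp_of_integrable (hH.integrable (gaussianN (m + 1)))
  have hfubini {H : (Fin (m + 1) → ℝ) → ℝ} (hH : PolyGrowth H) : ∫ x, H x ∂(gaussianN (m + 1)) =
      ∫ y, ∫ t, H (i.insertNth t y) ∂(gaussianReal 0 1) ∂(gaussianN m) := by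
    rw [← integral_prod_symm _ (hint hH)]
    exact (hsplit.integral_comp' H).symm
  have hxF : PolyGrowth fun x => x i * F x := (PolyGrowth.coord i).mul hF
  rw [hfubini hxF, hfubini hF']
  refine integral_congr_ae ?_
  filter_upwards [(hint hF).prod_left_ae, (hint hxF).prod_left_ae, (hint hF').prod_left_ae]
    with y hFy hxFy hF'y
  simp only [Fin.insertNth_apply_same] at hxFy ⊢
  simpa using integral_sub_mul_gaussianReal 0 1 (fun t => by simpa using hd (i.insertNth t y))
    hFy (by simpa using hxFy) hF'y

lemma pderiv_pderiv_comm {σ R : Type*} [CommSemiring R] (i j : σ) (P : MvPolynomial σ R) :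
    pderiv i (pderiv j P) = pderiv j (pderiv i P) := by
  obtain rfl | hij := eq_or_ne i j
  · rfl
  · ext α
    simp only [coeff_pderiv, Finsupp.add_apply, Finsupp.single_eq_of_ne hij,
      Finsupp.single_eq_of_ne hij.symm, add_zero]
    rw [add_right_comm]
    ring

section HermiteTransform

variable {σ R : Type*} [CommRing R]

/-- The creation operator `P ↦ Xᵢ P - ∂ᵢ P`, the adjoint of `∂ᵢ` for the standard Gaussian. -/
noncomputable def creation (i : σ) : MvPolynomial σ R →ₗ[R] MvPolynomial σ R :=
  LinearMap.mulLeft R (X i) - (pderiv i).toLinearMap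

lemma creation_apply (i : σ) (P : MvPolynomial σ R) : creation i P = X i * P - pderiv i P := rfl

lemma pderiv_creation [DecidableEq σ] (i j : σ) (P : MvPolynomial σ R) :
    pderiv j (creation i P) = creation i (pderiv j P) + if i = j then P else 0 := by
  simp only [creation_apply, map_sub, pderiv_mul, pderiv_X, Pi.single_apply,
    pderiv_pderiv_comm j i]
  split_ifs
  · ring
  · simp

lemma pderiv_aeval_X {S : Type*} [CommSemiring S] [Algebra S R] (i j : σ) (p : Polynomial S) :
    pderiv i (Polynomial.aeval (X j : MvPolynomial σ R) p) =
      Polynomial.aeval (X j) p.derivative * pderiv i (X j) :=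
  ((pderiv i).restrictScalars S).map_aeval p (X j)

lemma aeval_X_hermite_succ (i : σ) (k : ℕ) :
    Polynomial.aeval (X i : MvPolynomial σ R) (Polynomial.hermite (k + 1)) =
      creation i (Polynomial.aeval (X i) (Polynomial.hermite k)) := by
  simp [Polynomial.hermite_succ, creation_apply, pderiv_aeval_X]

lemma creation_mul_of_pderiv_eq_zero {i : σ} {Q : MvPolynomial σ R} (hQ : pderiv i Q = 0)
    (P : MvPolynomial σ R) : creation i (P * Q) = creation i P * Q := by
  simp only [creation_apply, pderiv_mul, hQ]
  ring

variable [Fintype σ]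

/-- The linear map taking `X^α` to the (unnormalised) multivariate Hermite polynomial
`∏ᵢ H_{αᵢ}(Xᵢ)`: it turns a table of Hermite coefficients, encoded as a polynomial, into the
polynomial having these coefficients. -/
noncomputable def hermiteTransform : MvPolynomial σ R →ₗ[R] MvPolynomial σ R :=
  (basisMonomials σ R).constr R fun α => ∏ i, Polynomial.aeval (X i) (Polynomial.hermite (α i))

lemma hermiteTransform_monomial (α : σ →₀ ℕ) (a : R) :
    hermiteTransform (monomial α a) =
      C a * ∏ i, Polynomial.aeval (X i) (Polynomial.hermite (α i)) := by
  have hbasis : monomial α a = a • basisMonomials σ R α := by simp [smul_monomial]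
  rw [hbasis, map_smul, hermiteTransform, Module.Basis.constr_basis, smul_eq_C_mul]

lemma hermiteTransform_C (a : R) : hermiteTransform (C a : MvPolynomial σ R) = C a := by
  simp [← monomial_zero', hermiteTransform_monomial]

lemma hermiteTransform_X_mul (i : σ) (c : MvPolynomial σ R) :
    hermiteTransform (X i * c) = creation i (hermiteTransform c) := by
  classical
  induction c using MvPolynomial.induction_on' with
  | add p q hp hq => simp [mul_add, hp, hq]
  | monomial α a =>
    have hne : ∀ j ∈ Finset.univ.erase i,
        Polynomial.aeval (X j) (Polynomial.hermite ((Finsupp.single i 1 + α : σ →₀ ℕ) j)) =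
          Polynomial.aeval (X j : MvPolynomial σ R) (Polynomial.hermite (α j)) := fun j hj => by
      simp [Finsupp.single_eq_of_ne (Finset.ne_of_mem_erase hj)]
    have hpd : pderiv (R := R) i (∏ j ∈ Finset.univ.erase i,
        Polynomial.aeval (X j) (Polynomial.hermite (α j))) = 0 :=
      Finset.prod_induction _ (pderiv i · = 0) (fun P Q hP hQ => by simp [hP, hQ])
        pderiv_one fun j hj => by
          rw [pderiv_aeval_X, pderiv_X_of_ne (Finset.ne_of_mem_erase hj), mul_zero]
    rw [X, monomial_mul, one_mul, hermiteTransform_monomial, hermiteTransform_monomial,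
      ← Finset.mul_prod_erase _ _ (Finset.mem_univ i),
      ← Finset.mul_prod_erase _
        (fun j => Polynomial.aeval (X j) (Polynomial.hermite (α j))) (Finset.mem_univ i),
      Finset.prod_congr rfl hne, Finsupp.add_apply, Finsupp.single_eq_same, add_comm 1,
      aeval_X_hermite_succ, ← creation_mul_of_pderiv_eq_zero hpd, ← smul_eq_C_mul,
      ← smul_eq_C_mul, map_smul]

lemma pderiv_hermiteTransform (i : σ) (c : MvPolynomial σ R) :
    pderiv i (hermiteTransform c) = hermiteTransform (pderiv i c) := by
  classical
  induction c using MvPolynomial.induction_on with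
  | C a => simp [hermiteTransform_C]
  | add p q hp hq => simp [hp, hq]
  | mul_X p j hp =>
    rw [mul_comm, hermiteTransform_X_mul, pderiv_creation, hp, ← hermiteTransform_X_mul,
      pderiv_mul, map_add, add_comm]
    simp only [pderiv_X, Pi.single_apply]
    split_ifs <;> simp

lemma hermiteTransform_surjective :
    Function.Surjective (hermiteTransform (σ := σ) (R := R)) := fun g => by
  induction g using MvPolynomial.induction_on with
  | C a => exact ⟨C a, hermiteTransform_C a⟩
  | add p q hp hq =>
    obtain ⟨c, rfl⟩ := hp
    obtain ⟨d, rfl⟩ := hq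
    exact ⟨c + d, map_add _ c d⟩
  | mul_X p i hp =>
    obtain ⟨c, rfl⟩ := hp
    refine ⟨X i * c + pderiv i c, ?_⟩
    rw [map_add, hermiteTransform_X_mul, ← pderiv_hermiteTransform, creation_apply,
      sub_add_cancel, mul_comm]

end HermiteTransform

section Dilate

variable {σ R : Type*} [CommSemiring R]

/-- The dilation `c(X) ↦ c(sX)`. On Hermite coefficients it is the Ornstein–Uhlenbeck (noise)
operator with correlation `s`. -/
noncomputable def dilate (s : R) : MvPolynomial σ R →ₐ[R] MvPolynomial σ R :=
  aeval fun i => C s * X i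

lemma dilate_monomial (s : R) (α : σ →₀ ℕ) (a : R) :
    dilate s (monomial α a) = monomial α (s ^ α.degree * a) := by
  rw [dilate, aeval_monomial, algebraMap_eq, Finsupp.prod]
  simp only [mul_pow, Finset.prod_mul_distrib, Finset.prod_pow_eq_pow_sum]
  rw [monomial_eq, Finsupp.prod, C_mul, C_pow, ← Finsupp.degree_apply]
  ring

lemma coeff_dilate (s : R) (α : σ →₀ ℕ) (c : MvPolynomial σ R) :
    coeff α (dilate s c) = s ^ α.degree * coeff α c := by
  classical
  induction c using MvPolynomial.induction_on' with
  | add p q hp hq => simp [hp, hq, mul_add]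
  | monomial β a =>
    rw [dilate_monomial, coeff_monomial, coeff_monomial]
    split_ifs with h <;> simp [h]

lemma dilate_zero (c : MvPolynomial σ R) : dilate 0 c = C (coeff 0 c) := by
  classical
  ext α
  rw [coeff_dilate, coeff_C]
  obtain rfl | hα := eq_or_ne α 0
  · simp
  · simp [hα.symm, zero_pow ((Finsupp.degree_eq_zero_iff α).not.2 hα)]

lemma dilate_one (c : MvPolynomial σ R) : dilate 1 c = c := by
  ext α
  simp [coeff_dilate]

lemma pderiv_dilate (i : σ) (s : R) (c : MvPolynomial σ R) :
    pderiv i (dilate s c) = C s * dilate s (pderiv i c) := by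
  ext α
  simp only [coeff_pderiv, coeff_dilate, coeff_C_mul, map_add, Finsupp.degree_single, pow_succ]
  ring

lemma X_mul_dilate_pderiv_monomial (i : σ) (s : R) (α : σ →₀ ℕ) (a : R) :
    X i * dilate s (pderiv i (monomial α a)) = (α i * s ^ (α.degree - 1)) • monomial α a := by
  rw [pderiv_monomial, dilate_monomial, X, monomial_mul, one_mul, smul_monomial, smul_eq_mul]
  obtain hα | hα := eq_or_ne (α i) 0
  · simp [hα]
  · have hle : Finsupp.single i 1 ≤ α := by simpa [Nat.one_le_iff_ne_zero] using hα
    have hdeg : (α - Finsupp.single i 1).degree + 1 = α.degree := by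
      conv_rhs => rw [← tsub_add_cancel_of_le hle, map_add, Finsupp.degree_single]
    rw [add_tsub_cancel_of_le hle, ← hdeg, Nat.add_sub_cancel]
    ring_nf

end Dilate

lemma mvPolynomial_induction_on_pderiv {σ R : Type*} [CommSemiring R]
    {P : MvPolynomial σ R → Prop} (zero : P 0)
    (of_pderiv : ∀ c, (∀ i, P (pderiv i c)) → P c) (c : MvPolynomial σ R) : P c := by
  suffices hdeg : ∀ d c, (∀ α : σ →₀ ℕ, d ≤ α.degree → coeff α c = 0) → P c from
    hdeg (c.totalDegree + 1) c fun α hα => coeff_eq_zero_of_totalDegree_lt hα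
  intro d
  induction d with
  | zero =>
    intro c hc
    rw [show c = 0 from MvPolynomial.ext _ _ fun α => hc α (Nat.zero_le _)]
    exact zero
  | succ d ih =>
    refine fun c hc => of_pderiv c fun i => ih _ fun α hα => ?_
    rw [coeff_pderiv, hc _ (by simpa using hα), zero_mul]

lemma hasDerivAt_eval_update {σ 𝕜 : Type*} [DecidableEq σ] [NontriviallyNormedField 𝕜]
    (P : MvPolynomial σ 𝕜) (i : σ) (x : σ → 𝕜) :
    HasDerivAt (fun t => eval (Function.update x i t) P) (eval x (pderiv i P)) (x i) := by
  induction P using MvPolynomial.induction_on with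
  | C a => simpa using hasDerivAt_const (x i) a
  | add p q hp hq => simpa using hp.fun_add hq
  | mul_X p j hp =>
    have hcoord :
        HasDerivAt (fun t => Function.update x i t j) (eval x (pderiv i (X j))) (x i) := by
      obtain rfl | hij := eq_or_ne j i
      · simpa using hasDerivAt_id' (x j)
      · simpa [pderiv_X_of_ne hij, Function.update_of_ne hij] using hasDerivAt_const (x i) (x j)
    convert! hp.fun_mul hcoord using 1
    · simp
    · simp only [pderiv_mul, map_add, map_mul, eval_X, Function.update_eq_self]

lemma hasDerivAt_dilate {σ 𝕜 : Type*} [Fintype σ] [NontriviallyNormedField 𝕜]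
    (φ : MvPolynomial σ 𝕜 →ₗ[𝕜] 𝕜) (c : MvPolynomial σ 𝕜) (s : 𝕜) :
    HasDerivAt (fun s => φ (dilate s c)) (∑ i, φ (X i * dilate s (pderiv i c))) s := by
  induction c using MvPolynomial.induction_on' with
  | add p q hp hq => simpa [mul_add, Finset.sum_add_distrib] using hp.fun_add hq
  | monomial α a =>
    have hφ (s : 𝕜) : φ (dilate s (monomial α a)) = s ^ α.degree * φ (monomial α a) := by
      rw [dilate_monomial, ← smul_eq_mul, ← smul_monomial, map_smul, smul_eq_mul]
    have hφ' (i : σ) : φ (X i * dilate s (pderiv i (monomial α a))) =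
        α i * s ^ (α.degree - 1) * φ (monomial α a) := by
      rw [X_mul_dilate_pderiv_monomial, map_smul, smul_eq_mul]
    simp only [hφ, hφ', ← Finset.sum_mul, ← Nat.cast_sum, ← Finsupp.degree_eq_sum]
    exact (hasDerivAt_pow α.degree s).mul_const _

lemma PolyGrowth.eval_dilate {σ : Type*} [Fintype σ] (L : MvPolynomial σ ℝ →ₗ[ℝ] MvPolynomial σ ℝ)
    (c : MvPolynomial σ ℝ) : PolyGrowth fun p : ℝ × (σ → ℝ) => eval p.2 (L (dilate p.1 c)) := by
  induction c using MvPolynomial.induction_on' with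
  | add p q hp hq => simpa using hp.add hq
  | monomial α a =>
    have hL (s : ℝ) : L (dilate s (monomial α a)) = s ^ α.degree • L (monomial α a) := by
      rw [dilate_monomial, ← smul_eq_mul, ← smul_monomial, map_smul]
    have hcoord (i : σ) : PolyGrowth fun p : ℝ × (σ → ℝ) => p.2 i :=
      .continuousLinearMap ((ContinuousLinearMap.proj (R := ℝ) (φ := fun _ => ℝ) i).comp
        (.snd ℝ ℝ (σ → ℝ)))
    simp only [hL, smul_eval]
    exact ((PolyGrowth.continuousLinearMap (.fst ℝ ℝ (σ → ℝ))).pow _).mul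
      (.mvPolynomial_eval_comp hcoord _)

lemma hasDerivAt_abs_rpow_mul_self {r : ℝ} (hr : 0 ≤ r) (t : ℝ) :
    HasDerivAt (fun t => |t| ^ r * t) ((r + 1) * |t| ^ r) t := by
  obtain rfl | ht := eq_or_ne t 0
  · have hcont : ContinuousAt (fun t : ℝ => |t| ^ r) 0 :=
      (continuous_abs.rpow_const fun _ => .inr hr).continuousAt
    have hzero : (r + 1) * |(0 : ℝ)| ^ r = |(0 : ℝ)| ^ r := by
      obtain rfl | hr' := eq_or_ne r 0
      · simp
      · simp [hr']
    rw [hzero, hasDerivAt_iff_tendsto_slope]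
    refine (hcont.tendsto.mono_left nhdsWithin_le_nhds).congr' ?_
    filter_upwards [self_mem_nhdsWithin] with t ht
    rw [Set.mem_compl_singleton_iff] at ht
    simp [slope_def_field, ht]
  · convert! ((hasDerivAt_abs ht).rpow_const (p := r) (.inl (abs_ne_zero.2 ht))).mul
      (hasDerivAt_id t) using 1
    have hsign : (SignType.sign t : ℝ) * t = |t| := sign_mul_self t
    have hcancel : |t| ^ r / |t| * |t| = |t| ^ r := div_mul_cancel₀ _ (abs_ne_zero.2 ht)
    rw [id, mul_one, Real.rpow_sub_one (abs_ne_zero.2 ht)]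
    linear_combination (-(r * (|t| ^ r / |t|))) * hsign - r * hcancel

lemma integral_mul_eval_creation {n : ℕ} (i : Fin n) {F F' : (Fin n → ℝ) → ℝ}
    (hd : ∀ x, HasDerivAt (fun t => F (Function.update x i t)) (F' x) (x i))
    (hF : PolyGrowth F) (hF' : PolyGrowth F') (v : MvPolynomial (Fin n) ℝ) :
    ∫ x, F x * eval x (creation i v) ∂(gaussianN n) = ∫ x, F' x * eval x v ∂(gaussianN n) := by
  have hv := PolyGrowth.mvPolynomial_eval v
  have hv' := PolyGrowth.mvPolynomial_eval (pderiv i v)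
  have hstein := integral_coord_mul_gaussianN i (F := fun x => F x * eval x v)
    (fun x => (hd x).fun_mul (hasDerivAt_eval_update v i x))
    (hF.mul hv) (by simpa using (hF'.mul hv).add (hF.mul hv'))
  simp only [Function.update_eq_self] at hstein
  rw [integral_add ((hF'.mul hv).integrable _) ((hF.mul hv').integrable _),
    ← sub_eq_iff_eq_add,
    ← integral_sub (((PolyGrowth.coord i).mul (hF.mul hv)).integrable _)
      ((hF.mul hv').integrable _)] at hstein
  rw [← hstein]
  congr with x
  simp only [creation_apply, map_sub, map_mul, eval_X]
  ring

lemma integral_abs_rpow_mul_eval_creation {n : ℕ} (i : Fin n) {r : ℝ} (hr : 0 ≤ r)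
    (u v : MvPolynomial (Fin n) ℝ) :
    ∫ x, |eval x u| ^ r * eval x u * eval x (creation i v) ∂(gaussianN n) =
      (r + 1) * ∫ x, |eval x u| ^ r * (eval x (pderiv i u) * eval x v) ∂(gaussianN n) := by
  have hu := PolyGrowth.mvPolynomial_eval u
  rw [integral_mul_eval_creation i (F' := fun x => (r + 1) * |eval x u| ^ r * eval x (pderiv i u))
    (fun x => ?_) ((hu.abs_rpow hr).mul hu)
    (((PolyGrowth.const _).mul (hu.abs_rpow hr)).mul (.mvPolynomial_eval _)), ← integral_const_mul]
  · congr with x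
    ring
  · simpa [Function.comp_def] using HasDerivAt.comp (x i) (hasDerivAt_abs_rpow_mul_self hr _)
      (hasDerivAt_eval_update u i x)

lemma integral_rpow_mul_rpow_le {α : Type*} {m : MeasurableSpace α} {μ : Measure α} {f g : α → ℝ}
    {a b : ℝ} (ha : 0 ≤ a) (hb : 0 ≤ b) (hab : a + b = 1) (hf0 : 0 ≤ f) (hg0 : 0 ≤ g)
    (hf : Integrable f μ) (hg : Integrable g μ) :
    ∫ x, f x ^ a * g x ^ b ∂μ ≤ (∫ x, f x ∂μ) ^ a * (∫ x, g x ∂μ) ^ b := by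
  have hofReal (x : α) : ENNReal.ofReal (f x ^ a * g x ^ b) =
      ENNReal.ofReal (f x) ^ a * ENNReal.ofReal (g x) ^ b := by
    rw [ENNReal.ofReal_mul (Real.rpow_nonneg (hf0 x) a),
      ENNReal.ofReal_rpow_of_nonneg (hf0 x) ha, ENNReal.ofReal_rpow_of_nonneg (hg0 x) hb]
  have hholder := ENNReal.lintegral_mul_norm_pow_le hf.1.aemeasurable.ennreal_ofReal
    hg.1.aemeasurable.ennreal_ofReal ha hb hab
  rw [← ofReal_integral_eq_lintegral_ofReal hf (.of_forall hf0),
    ← ofReal_integral_eq_lintegral_ofReal hg (.of_forall hg0),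
    ENNReal.ofReal_rpow_of_nonneg (integral_nonneg hf0) ha,
    ENNReal.ofReal_rpow_of_nonneg (integral_nonneg hg0) hb,
    ← ENNReal.ofReal_mul (Real.rpow_nonneg (integral_nonneg hf0) a)] at hholder
  have hmeas : AEStronglyMeasurable (fun x => f x ^ a * g x ^ b) μ :=
    ((hf.1.aemeasurable.pow_const a).mul (hg.1.aemeasurable.pow_const b)).aestronglyMeasurable
  rw [integral_eq_lintegral_of_nonneg_ae (.of_forall fun x =>
    mul_nonneg (Real.rpow_nonneg (hf0 x) a) (Real.rpow_nonneg (hg0 x) b)) hmeas]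
  refine ENNReal.toReal_le_of_le_ofReal (mul_nonneg (Real.rpow_nonneg (integral_nonneg hf0) a)
    (Real.rpow_nonneg (integral_nonneg hg0) b)) ?_
  simpa only [hofReal] using hholder

lemma rpow_le_of_mul_deriv_le {Φ Φ' B B' : ℝ → ℝ} {a t₀ : ℝ} (ha0 : 0 < a) (ha1 : a ≤ 1)
    (hΦ0 : ∀ t, 0 ≤ Φ t) (hΦ : ∀ t, HasDerivAt Φ (Φ' t) t) (hB : ∀ t, HasDerivAt B (B' t) t)
    (hB' : ∀ t, t₀ ≤ t → 0 ≤ B' t) (hle : ∀ t, t₀ ≤ t → a * Φ' t ≤ Φ t ^ (1 - a) * B' t)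
    (h0 : Φ t₀ ^ a ≤ B t₀) {t : ℝ} (ht : t₀ ≤ t) : Φ t ^ a ≤ B t := by
  -- `y ↦ y ^ a` is not differentiable at `0`, hence the shift by `ε`.
  have hmono (ε : ℝ) (hε : 0 < ε) : MonotoneOn (fun t => B t - (Φ t + ε) ^ a) (Set.Ici t₀) := by
    have hpos (t : ℝ) : 0 < Φ t + ε := add_pos_of_nonneg_of_pos (hΦ0 t) hε
    have hd (t : ℝ) : HasDerivAt (fun t => B t - (Φ t + ε) ^ a)
        (B' t - Φ' t * a * (Φ t + ε) ^ (a - 1)) t :=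
      (hB t).fun_sub (((hΦ t).add_const ε).rpow_const (.inl (hpos t).ne'))
    refine monotoneOn_of_hasDerivWithinAt_nonneg (convex_Ici t₀)
      (fun t _ => (hd t).continuousAt.continuousWithinAt) (fun t _ => (hd t).hasDerivWithinAt)
      fun t ht => sub_nonneg.2 ?_
    have ht : t₀ ≤ t := interior_subset ht
    calc Φ' t * a * (Φ t + ε) ^ (a - 1) = a * Φ' t * (Φ t + ε) ^ (a - 1) := by ring
      _ ≤ (Φ t + ε) ^ (1 - a) * B' t * (Φ t + ε) ^ (a - 1) := by
        have hΦε : Φ t ^ (1 - a) ≤ (Φ t + ε) ^ (1 - a) :=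
          Real.rpow_le_rpow (hΦ0 t) (le_add_of_nonneg_right hε.le) (sub_nonneg.2 ha1)
        have := hpos t
        refine mul_le_mul_of_nonneg_right ?_ (by positivity)
        exact (hle t ht).trans (mul_le_mul_of_nonneg_right hΦε (hB' t ht))
      _ = B' t := by
        rw [mul_right_comm, ← Real.rpow_add (hpos t)]
        simp
  have hshift : ∀ ε > 0, (Φ t + ε) ^ a ≤ B t - B t₀ + (Φ t₀ + ε) ^ a := fun ε hε => by
    linarith [hmono ε hε Set.self_mem_Ici ht ht]
  have hlim (y : ℝ) : Filter.Tendsto (fun ε : ℝ => (y + ε) ^ a) (nhdsWithin 0 (Set.Ioi 0))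
      (nhds (y ^ a)) := by
    have hcont : Continuous fun ε : ℝ => (y + ε) ^ a :=
      (continuous_const.add continuous_id).rpow_const fun _ => .inr ha0.le
    simpa using (hcont.tendsto 0).mono_left nhdsWithin_le_nhds
  linarith [le_of_tendsto_of_tendsto (hlim (Φ t)) ((hlim (Φ t₀)).const_add (B t - B t₀))
    (eventually_nhdsWithin_of_forall hshift)]

section Hypercontractivity

variable {n : ℕ}

lemma integral_abs_rpow_mul_eval_creation_hermiteTransform_dilate {r : ℝ} (hr : 0 ≤ r) (i : Fin n)
    (c : MvPolynomial (Fin n) ℝ) (s : ℝ) :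
    ∫ x, |eval x (hermiteTransform (dilate s c))| ^ r * eval x (hermiteTransform (dilate s c)) *
        eval x (creation i (hermiteTransform (dilate s (pderiv i c)))) ∂(gaussianN n) =
      (r + 1) * s * ∫ x, |eval x (hermiteTransform (dilate s c))| ^ r *
        eval x (hermiteTransform (dilate s (pderiv i c))) ^ 2 ∂(gaussianN n) := by
  rw [integral_abs_rpow_mul_eval_creation i hr, pderiv_hermiteTransform, pderiv_dilate,
    ← smul_eq_C_mul, map_smul, mul_assoc, ← integral_const_mul s]
  congr with x
  rw [smul_eval]
  ring

lemma hasDerivAt_integral_abs_hermiteTransform_rpow {p : ℝ} (hp : 2 ≤ p)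
    (c : MvPolynomial (Fin n) ℝ) (s : ℝ) :
    HasDerivAt (fun s => ∫ x, |eval x (hermiteTransform (dilate s c))| ^ p ∂(gaussianN n))
      (p * (p - 1) * s * ∑ i, ∫ x, |eval x (hermiteTransform (dilate s c))| ^ (p - 2) *
        eval x (hermiteTransform (dilate s (pderiv i c))) ^ 2 ∂(gaussianN n)) s := by
  have hd (s : ℝ) (x : Fin n → ℝ) :
      HasDerivAt (fun s => eval x (hermiteTransform (dilate s c)))
        (∑ i, eval x (creation i (hermiteTransform (dilate s (pderiv i c))))) s := by
    simpa [hermiteTransform_X_mul] using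
      hasDerivAt_dilate ((aeval x).toLinearMap ∘ₗ hermiteTransform) c s
  have hu := PolyGrowth.eval_dilate hermiteTransform c
  have hu' (i : Fin n) := PolyGrowth.eval_dilate (creation i ∘ₗ hermiteTransform) (pderiv i c)
  have hp2 : 0 ≤ p - 2 := sub_nonneg.2 hp
  convert! PolyGrowth.hasDerivAt_integral (gaussianN n)
    (fun s x => (hasDerivAt_abs_rpow _ (by linarith)).comp s (hd s x)) (hu.abs_rpow (by linarith))
    ((((PolyGrowth.const p).mul (hu.abs_rpow hp2)).mul hu).mul (.sum _ fun i _ => hu' i)) s using 1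
  have hint (i : Fin n) := (((hu.abs_rpow hp2).mul hu).mul (hu' i)).prodMk_left s |>.integrable
    (gaussianN n)
  simp only [LinearMap.comp_apply] at hint
  simp only [mul_assoc p, Finset.mul_sum]
  rw [integral_finsetSum _ fun i _ => (hint i).const_mul p]
  refine Finset.sum_congr rfl fun i _ => ?_
  rw [integral_const_mul, integral_abs_rpow_mul_eval_creation_hermiteTransform_dilate hp2]
  ring

lemma hasDerivAt_norm2sq_hermiteTransform (r : ℝ) (c : MvPolynomial (Fin n) ℝ) (s : ℝ) :
    HasDerivAt (fun s => norm2sq (hermiteTransform (dilate (r * s) c)))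
      (2 * r ^ 2 * s * ∑ i, norm2sq (hermiteTransform (dilate (r * s) (pderiv i c)))) s := by
  have hone := hasDerivAt_integral_abs_hermiteTransform_rpow le_rfl c (r * s)
  norm_num at hone
  convert! hone.comp s ((hasDerivAt_id' s).const_mul r) using 1
  simp only [norm2sq]
  ring

lemma integral_abs_rpow_mul_sq_le {p : ℝ} (hp : 2 ≤ p) (u v : MvPolynomial (Fin n) ℝ) :
    ∫ x, |eval x u| ^ (p - 2) * eval x v ^ 2 ∂(gaussianN n) ≤
      (∫ x, |eval x u| ^ p ∂(gaussianN n)) ^ (1 - 2 / p) *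
        (∫ x, |eval x v| ^ p ∂(gaussianN n)) ^ (2 / p) := by
  have hp0 : 0 < p := by linarith
  have hint (w : MvPolynomial (Fin n) ℝ) : Integrable (fun x => |eval x w| ^ p) (gaussianN n) :=
    ((PolyGrowth.mvPolynomial_eval w).abs_rpow hp0.le).integrable _
  convert integral_rpow_mul_rpow_le (a := 1 - 2 / p) (b := 2 / p)
    (sub_nonneg.2 ((div_le_one hp0).2 hp)) (by positivity) (sub_add_cancel 1 _)
    (fun x => by positivity) (fun x => by positivity) (hint u) (hint v) using 4 with x
  · rw [← Real.rpow_mul (abs_nonneg _)]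
    congr 1
    field_simp
  · rw [← Real.rpow_mul (abs_nonneg _), mul_div_cancel₀ _ hp0.ne', Real.rpow_two, sq_abs]

lemma norm2sq_nonneg (g : MvPolynomial (Fin n) ℝ) : 0 ≤ norm2sq g :=
  integral_nonneg fun _ => sq_nonneg _

lemma norm2sq_C (a : ℝ) : norm2sq (C a : MvPolynomial (Fin n) ℝ) = a ^ 2 := by
  simp [norm2sq]

theorem integral_abs_hermiteTransform_dilate_rpow_le {p : ℝ} (hp : 2 ≤ p)
    (c : MvPolynomial (Fin n) ℝ) {s : ℝ} (hs : 0 ≤ s) :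
    (∫ x, |eval x (hermiteTransform (dilate s c))| ^ p ∂(gaussianN n)) ^ (2 / p) ≤
      norm2sq (hermiteTransform (dilate (√(p - 1) * s) c)) := by
  have hp0 : 0 < p := by linarith
  have hp1 : 0 ≤ p - 1 := by linarith
  induction c using mvPolynomial_induction_on_pderiv generalizing s with
  | zero => simp [norm2sq, hp0.ne']
  | of_pderiv c ih =>
    have hB := hasDerivAt_norm2sq_hermiteTransform √(p - 1) c
    rw [Real.sq_sqrt hp1] at hB
    refine rpow_le_of_mul_deriv_le (by positivity) ((div_le_one hp0).2 hp)
      (fun s => integral_nonneg fun x => by positivity)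
      (fun s => hasDerivAt_integral_abs_hermiteTransform_rpow hp c s) hB (fun s hs => ?_)
      (fun s hs => ?_) ?_ hs
    · exact mul_nonneg (by positivity) (Finset.sum_nonneg fun i _ => norm2sq_nonneg _)
    · have hstep (i : Fin n) := (integral_abs_rpow_mul_sq_le hp (hermiteTransform (dilate s c))
        (hermiteTransform (dilate s (pderiv i c)))).trans
        (mul_le_mul_of_nonneg_left (ih i hs) (by positivity))
      calc 2 / p * (p * (p - 1) * s * ∑ i, ∫ x, |eval x (hermiteTransform (dilate s c))| ^ (p - 2) *
            eval x (hermiteTransform (dilate s (pderiv i c))) ^ 2 ∂(gaussianN n))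
          = 2 * (p - 1) * s * ∑ i, ∫ x, |eval x (hermiteTransform (dilate s c))| ^ (p - 2) *
            eval x (hermiteTransform (dilate s (pderiv i c))) ^ 2 ∂(gaussianN n) := by
            field_simp
        _ ≤ 2 * (p - 1) * s * _ :=
            mul_le_mul_of_nonneg_left (Finset.sum_le_sum fun i _ => hstep i) (by positivity)
        _ = _ := by rw [← Finset.mul_sum]; ring
    · simp only [mul_zero, dilate_zero, hermiteTransform_C, norm2sq_C, eval_C, integral_const,
        probReal_univ, one_smul]
      rw [← Real.rpow_mul (abs_nonneg _), mul_div_cancel₀ _ hp0.ne', Real.rpow_two, sq_abs]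

end Hypercontractivity

section Parseval

variable {n : ℕ}

lemma prod_factorial_add_single {σ : Type*} [Fintype σ] (α : σ →₀ ℕ) (i : σ) :
    ∏ j, ((α + Finsupp.single i 1 : σ →₀ ℕ) j).factorial = (α i + 1) * ∏ j, (α j).factorial := by
  classical
  have hne : ∀ j ∈ Finset.univ.erase i,
      ((α + Finsupp.single i 1 : σ →₀ ℕ) j).factorial = (α j).factorial := fun j hj => by
    simp [Finsupp.single_eq_of_ne (Finset.ne_of_mem_erase hj)]
  rw [← Finset.mul_prod_erase _ _ (Finset.mem_univ i), Finset.prod_congr rfl hne,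
    ← Finset.mul_prod_erase _ (fun j => (α j).factorial) (Finset.mem_univ i)]
  simp [Nat.factorial_succ, mul_assoc]

lemma integral_eval_hermiteTransform (c : MvPolynomial (Fin n) ℝ) :
    ∫ x, eval x (hermiteTransform c) ∂(gaussianN n) = coeff 0 c := by
  induction c using MvPolynomial.induction_on with
  | C a => simp [hermiteTransform_C]
  | add p q hp hq =>
    simp only [map_add, coeff_add]
    rw [integral_add ((PolyGrowth.mvPolynomial_eval _).integrable _)
      ((PolyGrowth.mvPolynomial_eval _).integrable _), hp, hq]
  | mul_X p i =>
    have hadj := integral_mul_eval_creation i (fun x => hasDerivAt_const (x i) 1) (.const 1)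
      (.const 0) (hermiteTransform p)
    simp only [one_mul, zero_mul, integral_zero] at hadj
    rw [mul_comm, hermiteTransform_X_mul, hadj, coeff_X_mul', if_neg (by simp)]

lemma integral_eval_hermiteTransform_mul_X (c d : MvPolynomial (Fin n) ℝ) (i : Fin n) :
    ∫ x, eval x (hermiteTransform c) * eval x (hermiteTransform (d * X i)) ∂(gaussianN n) =
      ∫ x, eval x (hermiteTransform (pderiv i c)) * eval x (hermiteTransform d) ∂(gaussianN n) := by
  rw [mul_comm d, hermiteTransform_X_mul, ← pderiv_hermiteTransform]
  exact integral_mul_eval_creation i (hasDerivAt_eval_update _ i) (.mvPolynomial_eval _)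
    (.mvPolynomial_eval _) _

lemma hasSum_integral_hermiteTransform_mul (c d : MvPolynomial (Fin n) ℝ) :
    HasSum (fun α : Fin n →₀ ℕ => ↑(∏ i, (α i).factorial) * coeff α c * coeff α d)
      (∫ x, eval x (hermiteTransform c) * eval x (hermiteTransform d) ∂(gaussianN n)) := by
  induction d using MvPolynomial.induction_on generalizing c with
  | C a =>
    convert! hasSum_single (0 : Fin n →₀ ℕ) (f := fun α => ↑(∏ i, (α i).factorial) * coeff α c *
      coeff α (C a : MvPolynomial (Fin n) ℝ)) (fun α hα => ?_) using 1
    · simp [hermiteTransform_C, integral_mul_const, integral_eval_hermiteTransform]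
    · rw [coeff_C, if_neg hα.symm, mul_zero]
  | add p q hp hq =>
    have hint (d : MvPolynomial (Fin n) ℝ) := ((PolyGrowth.mvPolynomial_eval
      (hermiteTransform c)).mul (.mvPolynomial_eval (hermiteTransform d))).integrable (gaussianN n)
    simp only [map_add, coeff_add, mul_add]
    rw [integral_add (hint p) (hint q)]
    exact (hp c).add (hq c)
  | mul_X p i hp =>
    rw [integral_eval_hermiteTransform_mul_X,
      ← (add_left_injective (Finsupp.single i 1)).hasSum_iff fun α hα => ?_]
    · convert! hp (pderiv i c) using 1
      ext α
      simp only [Function.comp_apply, coeff_mul_X, coeff_pderiv, prod_factorial_add_single]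
      push_cast
      ring
    · rw [coeff_mul_X', if_neg, mul_zero]
      refine fun hi => hα ⟨α - Finsupp.single i 1, tsub_add_cancel_of_le ?_⟩
      simpa [Nat.one_le_iff_ne_zero] using hi

lemma hasSum_norm2sq_hermiteTransform (c : MvPolynomial (Fin n) ℝ) :
    HasSum (fun α : Fin n →₀ ℕ => ↑(∏ i, (α i).factorial) * coeff α c ^ 2)
      (norm2sq (hermiteTransform c)) := by
  simpa only [sq, mul_assoc, norm2sq] using hasSum_integral_hermiteTransform_mul c c

lemma norm2sq_hermiteTransform_dilate_mono (c : MvPolynomial (Fin n) ℝ) {r s : ℝ} (hr : 0 ≤ r)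
    (hrs : r ≤ s) :
    norm2sq (hermiteTransform (dilate r c)) ≤ norm2sq (hermiteTransform (dilate s c)) := by
  refine hasSum_le (fun α => ?_) (hasSum_norm2sq_hermiteTransform (dilate r c))
    (hasSum_norm2sq_hermiteTransform (dilate s c))
  simp only [coeff_dilate, mul_pow]
  gcongr

lemma hermiteMv_eq_eval_hermiteTransform (α : Fin n →₀ ℕ) (x : Fin n → ℝ) :
    hermiteMv α x = (√(∏ i, (α i).factorial : ℕ))⁻¹ *
      eval x (hermiteTransform (monomial α 1)) := by
  have heval (i : Fin n) : eval x (Polynomial.aeval (X i) (Polynomial.hermite (α i))) =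
      ((Polynomial.hermite (α i)).map (Int.castRingHom ℝ)).eval (x i) := by
    rw [Polynomial.aeval_def, Polynomial.hom_eval₂, Polynomial.eval_map, eval_X,
      Subsingleton.elim ((eval x).comp _) (Int.castRingHom ℝ)]
  simp only [hermiteMv, hermiteFn, Finset.prod_div_distrib, hermiteTransform_monomial, C_1, one_mul,
    map_prod, heval, Nat.cast_prod, Real.sqrt_prod _ fun _ _ => Nat.cast_nonneg _]
  ring

lemma hermiteCoeff_hermiteTransform (c : MvPolynomial (Fin n) ℝ) (α : Fin n →₀ ℕ) :
    hermiteCoeff (hermiteTransform c) α = √(∏ i, (α i).factorial : ℕ) * coeff α c := by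
  have hsum := hasSum_integral_hermiteTransform_mul c (monomial α 1)
  have hcoeff := hsum.unique (hasSum_single α fun β hβ => by
    rw [coeff_monomial, if_neg hβ.symm, mul_zero])
  rw [coeff_monomial, if_pos rfl, mul_one] at hcoeff
  simp only [hermiteCoeff, hermiteCoeffF, hermiteMv_eq_eval_hermiteTransform,
    mul_left_comm (eval _ (hermiteTransform c))]
  rw [integral_const_mul, hcoeff, ← mul_assoc, inv_mul_eq_div, Real.div_sqrt]

lemma hyperVar_hermiteTransform (R : ℝ) (c : MvPolynomial (Fin n) ℝ) :
    hyperVar R (hermiteTransform c) =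
      norm2sq (hermiteTransform (dilate R (c - C (coeff 0 c)))) := by
  rw [hyperVar, hyperVarGE, ← Finsupp.equivFunOnFinite.tsum_eq,
    ← (hasSum_norm2sq_hermiteTransform _).tsum_eq]
  refine tsum_congr fun α => ?_
  rw [Finsupp.equivFunOnFinite, Equiv.coe_fn_mk, hermiteCoeff_hermiteTransform, coeff_dilate,
    coeff_sub, coeff_C, ← Finsupp.degree_eq_sum]
  obtain rfl | hα := eq_or_ne α 0
  · simp
  · have hdeg : 1 ≤ α.degree :=
      Nat.one_le_iff_ne_zero.2 ((Finsupp.degree_eq_zero_iff α).not.2 hα)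
    rw [if_pos hdeg, if_neg hα.symm, mul_pow, Real.sq_sqrt (by positivity)]
    ring

end Parseval

section Concentration

variable {n : ℕ}

theorem integral_abs_sub_integral_rpow_le_hyperVar {p R : ℝ} (hp : 2 ≤ p) (hR : 0 ≤ R)
    (hpR : p - 1 ≤ R ^ 2) (g : MvPolynomial (Fin n) ℝ) :
    (∫ x, |eval x g - ∫ y, eval y g ∂(gaussianN n)| ^ p ∂(gaussianN n)) ^ (2 / p) ≤
      hyperVar R g := by
  obtain ⟨c, rfl⟩ := hermiteTransform_surjective g
  have hcenter (x : Fin n → ℝ) : eval x (hermiteTransform (dilate 1 (c - C (coeff 0 c)))) =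
      eval x (hermiteTransform c) - ∫ y, eval y (hermiteTransform c) ∂(gaussianN n) := by
    rw [integral_eval_hermiteTransform, dilate_one, map_sub, hermiteTransform_C, map_sub, eval_C]
  have hhyper := integral_abs_hermiteTransform_dilate_rpow_le hp (c - C (coeff 0 c)) zero_le_one
  simp only [hcenter, mul_one] at hhyper
  rw [hyperVar_hermiteTransform]
  exact hhyper.trans
    (norm2sq_hermiteTransform_dilate_mono _ (Real.sqrt_nonneg _) (Real.sqrt_le_iff.2 ⟨hR, hpR⟩))

lemma norm2sq_le_sq_integral_add_hyperVar {R : ℝ} (hR : 1 ≤ R) (g : MvPolynomial (Fin n) ℝ) :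
    norm2sq g ≤ (∫ x, eval x g ∂(gaussianN n)) ^ 2 + hyperVar R g := by
  have hg := PolyGrowth.mvPolynomial_eval g
  have hvar := variance_eq_sub ((memLp_two_iff_integrable_sq hg.1.aestronglyMeasurable).2
    ((hg.pow 2).integrable (gaussianN n)))
  rw [variance_eq_integral hg.1.aemeasurable] at hvar
  have hle := integral_abs_sub_integral_rpow_le_hyperVar le_rfl (zero_le_one.trans hR)
    (by nlinarith) g
  norm_num at hle
  rw [hvar] at hle
  exact sub_le_iff_le_add'.1 hle

lemma measure_lt_abs_le_of_integral_abs_rpow_le {α : Type*} {m : MeasurableSpace α} {μ : Measure α}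
    {F : α → ℝ} {p r t : ℝ} (hp : 0 < p) (hr : 0 ≤ r) (ht : 0 ≤ t)
    (hF : Integrable (fun x => |F x| ^ p) μ) (hle : ∫ x, |F x| ^ p ∂μ ≤ (r * t) ^ p) :
    μ {x | t < |F x|} ≤ ENNReal.ofReal (r ^ p) := by
  obtain rfl | ht := ht.eq_or_lt
  · rw [mul_zero, Real.zero_rpow hp.ne'] at hle
    have hzero := (integral_eq_zero_iff_of_nonneg (fun x => by positivity) hF).1
      (hle.antisymm (integral_nonneg fun x => by positivity))
    refine le_of_eq_of_le (measure_eq_zero_iff_ae_notMem.2 ?_) zero_le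
    filter_upwards [hzero] with x hx
    simpa [Real.rpow_eq_zero (abs_nonneg _) hp.ne'] using hx
  · have htp : ENNReal.ofReal (t ^ p) ≠ 0 := by simpa using Real.rpow_pos_of_pos ht p
    have hmarkov := meas_ge_le_lintegral_div hF.1.aemeasurable.ennreal_ofReal htp
      ENNReal.ofReal_ne_top
    rw [← ofReal_integral_eq_lintegral_ofReal hF (.of_forall fun x => by positivity)] at hmarkov
    calc μ {x | t < |F x|}
        ≤ μ {x | ENNReal.ofReal (t ^ p) ≤ ENNReal.ofReal (|F x| ^ p)} :=
          measure_mono fun x hx =>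
            ENNReal.ofReal_le_ofReal (Real.rpow_le_rpow ht.le (le_of_lt hx) hp.le)
      _ ≤ ENNReal.ofReal ((r * t) ^ p) / ENNReal.ofReal (t ^ p) := by
          refine hmarkov.trans ?_
          gcongr
      _ = ENNReal.ofReal (r ^ p) := by
          rw [Real.mul_rpow hr ht.le, ENNReal.ofReal_mul (by positivity),
            ENNReal.mul_div_cancel_right htp ENNReal.ofReal_ne_top]

lemma mulClose_of_abs_sub_le {ν a b : ℝ} (hab : |a - b| ≤ (1 - Real.exp (-ν)) * |b|) :
    MulClose ν a b := by
  obtain rfl | hb := eq_or_ne b 0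
  · exact .inl ⟨by simpa using hab, rfl⟩
  have hdiv : |a / b - 1| ≤ 1 - Real.exp (-ν) := by
    rwa [div_sub_one hb, abs_div, div_le_iff₀ (abs_pos.2 hb)]
  obtain ⟨hlow, hupp⟩ := abs_le.1 hdiv
  have hlow' : Real.exp (-ν) ≤ a / b := by linarith
  have hcosh : 1 ≤ (Real.exp ν + Real.exp (-ν)) / 2 := Real.cosh_eq ν ▸ Real.one_le_cosh ν
  exact .inr ⟨mul_pos_iff.2 (div_pos_iff.1 ((Real.exp_pos _).trans_le hlow')), hlow',
    by linarith⟩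

-- The constant `3 / 5` lies between `1 / √3`, which `hyperVar_le_sq_of_attenuated` needs, and
-- `1 - exp (-1)`, the best one here.
lemma three_fifths_mul_le_one_sub_exp_neg {γ : ℝ} (hγ0 : 0 ≤ γ) (hγ1 : γ ≤ 1) :
    3 / 5 * γ ≤ 1 - Real.exp (-γ) := by
  suffices hinv : (1 - 3 / 5 * γ)⁻¹ ≤ Real.exp γ by
    rw [le_sub_comm, Real.exp_neg]
    exact inv_le_of_inv_le₀ (by linarith) hinv
  refine le_trans ?_ (Real.quadratic_le_exp_of_nonneg hγ0)
  rw [inv_le_iff_one_le_mul₀ (by linarith)]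
  nlinarith [mul_nonneg hγ0 (sub_nonneg.2 hγ1),
    mul_nonneg (mul_nonneg hγ0 hγ0) (sub_nonneg.2 hγ1)]

lemma hyperVar_le_sq_of_attenuated {R θ : ℝ} (hR : 1 ≤ R) (hθ0 : 0 ≤ θ) (hθ : θ ≤ 1 / 4)
    {g : MvPolynomial (Fin n) ℝ} (hatt : hyperVar R g ≤ θ * norm2sq g) :
    hyperVar R g ≤ (6 / 5 * √θ * |∫ x, eval x g ∂(gaussianN n)|) ^ 2 := by
  have hnorm := norm2sq_le_sq_integral_add_hyperVar hR g
  have hquarter := mul_le_mul_of_nonneg_right hθ (norm2sq_nonneg g)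
  rw [mul_pow, mul_pow, Real.sq_sqrt hθ0, sq_abs]
  have hnorm' : norm2sq g ≤ 4 / 3 * (∫ x, eval x g ∂(gaussianN n)) ^ 2 := by linarith
  nlinarith [mul_le_mul_of_nonneg_left hnorm' hθ0,
    mul_nonneg hθ0 (sq_nonneg (∫ x, eval x g ∂(gaussianN n)))]

theorem attenuated_multiplicatively_close_general {R θ γ q : ℝ} (hR : 1 ≤ R) (hθ0 : 0 ≤ θ)
    {g : MvPolynomial (Fin n) ℝ} (hatt : hyperVar R g ≤ θ * norm2sq g) (hγ0 : 0 < γ)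
    (hγ1 : γ ≤ 1) (hq0 : 0 ≤ q) (hq : q ≤ R ^ 2 + 1) :
    gaussianN n {x | ¬ MulClose γ (eval x g) (∫ y, eval y g ∂(gaussianN n))} ≤
      ENNReal.ofReal ((2 * √θ / γ) ^ q) := by
  obtain hr | hr := le_or_gt 1 (2 * √θ / γ)
  · exact prob_le_one.trans (by simpa using Real.one_le_rpow hr hq0)
  have hθ : θ ≤ 1 / 4 := by
    rw [div_lt_one hγ0] at hr
    nlinarith [Real.sq_sqrt hθ0, Real.sqrt_nonneg θ]
  have hp : 2 ≤ R ^ 2 + 1 := by nlinarith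
  set μ := ∫ y, eval y g ∂(gaussianN n)
  have hmoment : ∫ x, |eval x g - μ| ^ (R ^ 2 + 1) ∂(gaussianN n) ≤
      (2 * √θ / γ * (3 / 5 * γ * |μ|)) ^ (R ^ 2 + 1) := by
    have hscale : 2 * √θ / γ * (3 / 5 * γ * |μ|) = 6 / 5 * √θ * |μ| := by
      field_simp
      ring
    rw [hscale, ← Real.rpow_le_rpow_iff (z := 2 / (R ^ 2 + 1))
      (integral_nonneg fun x => by positivity) (by positivity) (by positivity),
      ← Real.rpow_mul (by positivity), mul_div_cancel₀ _ (by positivity), Real.rpow_two]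
    exact (integral_abs_sub_integral_rpow_le_hyperVar hp (zero_le_one.trans hR) (by simp) g).trans
      (hyperVar_le_sq_of_attenuated hR hθ0 hθ hatt)
  have hclose (x : Fin n → ℝ) (hx : |eval x g - μ| ≤ 3 / 5 * γ * |μ|) :
      MulClose γ (eval x g) μ :=
    mulClose_of_abs_sub_le (hx.trans (mul_le_mul_of_nonneg_right
      (three_fifths_mul_le_one_sub_exp_neg hγ0.le hγ1) (abs_nonneg μ)))
  have hg := (PolyGrowth.mvPolynomial_eval g).sub (.const μ)
  calc gaussianN n {x | ¬ MulClose γ (eval x g) μ}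
      ≤ gaussianN n {x | 3 / 5 * γ * |μ| < |eval x g - μ|} :=
        measure_mono fun x hx => not_le.1 (mt (hclose x) hx)
    _ ≤ ENNReal.ofReal ((2 * √θ / γ) ^ (R ^ 2 + 1)) :=
        measure_lt_abs_le_of_integral_abs_rpow_le (by positivity) (by positivity) (by positivity)
          ((hg.abs_rpow (by positivity)).integrable _) hmoment
    _ ≤ ENNReal.ofReal ((2 * √θ / γ) ^ q) :=
        ENNReal.ofReal_le_ofReal
          (Real.rpow_le_rpow_of_exponent_ge' (by positivity) hr.le hq0 hq)

end Concentration

/-- Attenuated polynomials take values multiplicatively close to their means: if `g`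
is `(R,θ)`-attenuated with `R ≥ √2` and `0 ≤ θ ≤ 1`, `μ = E_{x ∼ N(0,1)^n}[g(x)]`,
and `0 < γ ≤ 1`, then the probability over `x ∼ N(0,1)^n` that `g(x) ≈_γ μ` fails is
at most `(2√θ/γ)^{R²/2 + 1}`. -/
theorem attenuated_multiplicatively_close (n : ℕ) (g : MvPolynomial (Fin n) ℝ)
    (R θ : ℝ) (hR : Real.sqrt 2 ≤ R) (hθ0 : 0 ≤ θ) (hθ1 : θ ≤ 1)
    (hatt : hyperVar R g ≤ θ * norm2sq g)
    (γ : ℝ) (hγ0 : 0 < γ) (hγ1 : γ ≤ 1) :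
    gaussianN n {x | ¬ MulClose γ (eval x g) (∫ y, eval y g ∂(gaussianN n))} ≤
      ENNReal.ofReal ((2 * Real.sqrt θ / γ) ^ (R ^ 2 / 2 + 1)) := by
  have hR1 : 1 ≤ R := (Real.one_le_sqrt.2 one_le_two).trans hR
  exact attenuated_multiplicatively_close_general hR1 hθ0 hatt hγ0 hγ1 (by positivity)
    (by linarith [sq_nonneg R])
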